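/- arXiv:1409.2333 — 2 statements merged into one kernel-verified Lean document; each statement's English description precedes it below -/
import Mathlib

section
/- Let n be an odd positive integer. There exist an open interval I_{π/4} containing π/4 and an open interval I_{3π/4} containing 3π/4 such that for every θ ∈ (I_{π/4} ∪ I_{3π/4}) \ {π/4, 3π/4}, the nodal set N(Φ^θ_n) is nonempty and connected, the gradient of Φ^θ_n vanishes nowhere on N(Φ^θ_n) (so the nodal set is a regular simple curve), and ℝ² \ N(Φ^θ_n) has exactly two connected components, i.e. Φ^θ_n has exactly two nodal domains. -/
/-- The physicist's Hermite polynomials: `H 0 = 1`, `H 1 = 2X`,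
`H (n+2) = 2X · H (n+1) - 2(n+1) · H n`. -/
noncomputable def H : ℕ → Polynomial ℝ
  | 0 => 1
  | 1 => Polynomial.C 2 * Polynomial.X
  | n + 2 => Polynomial.C 2 * Polynomial.X * H (n + 1) - Polynomial.C (2 * (n + 1) : ℝ) * H n

/-- The eigenfunction `Φ^θ_n(x,y) = (cos θ · H_n(x) + sin θ · H_n(y)) e^{-(x²+y²)/2}`. -/
noncomputable def Phi (n : ℕ) (θ : ℝ) : ℝ × ℝ → ℝ := fun p =>
  (Real.cos θ * (H n).eval p.1 + Real.sin θ * (H n).eval p.2) *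
    Real.exp (-(p.1 ^ 2 + p.2 ^ 2) / 2)

/-- The nodal set of `Φ^θ_n`. -/
noncomputable def nodalSet (n : ℕ) (θ : ℝ) : Set (ℝ × ℝ) := {p | Phi n θ p = 0}

/-- The number of nodal domains: the number of connected components of the
complement of the nodal set. -/
noncomputable def numNodalDomains (n : ℕ) (θ : ℝ) : ℕ :=
  {C : Set (ℝ × ℝ) | ∃ p, Phi n θ p ≠ 0 ∧
    C = connectedComponentIn {q : ℝ × ℝ | Phi n θ q ≠ 0} p}.ncard

section

/-!
Write `f = H n`, `a = cos θ` and `b = sin θ`; the sign of `Phi n θ` at `(x, y)` is that of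
`a f(x) + b f(y)`. As the nodal set turns out to be regular, it is the intersection of the closures
of the regions `Phi n θ > 0` and `Phi n θ < 0`, and since the plane is unicoherent it suffices to
show that both regions are connected. By the oddness of `f` we may take `a, b > 0` and consider the
positive region only.

By Hermite's equation, the Sonin function `f² + f'² / 2n` increases on `[0, ∞)`, so the critical
values of `f` grow in absolute value with the distance to `0`. Moving one coordinate at a time, and
climbing along `f`, a point of the region reaches the corner at infinity or a point `(x, y)` with
critical coordinates. The latter is never a dead end: climb further if `f(x) < 0` or `f(y) < 0`;
otherwise move to the diagonal point of the coordinate farther from `0`, reflect the coordinate with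
the smaller weight through `0`, which stays in the region exactly because `a ≠ b`, and climb away
from `0` out of the local minimum reached there, to a critical point with a larger value of `f`.
Moving to the diagonal is possible because for `θ` near `π / 4` or `3π / 4` the two weights are
nearly equal in absolute value, hence do not change the order of the absolute critical values.
-/

open Set Filter Topology

section Topology

theorem sub_eq_sub_of_coe_addCircle_eq {X : Type*} [TopologicalSpace X] {S : Set X}
    (hS : IsPreconnected S) {p : ℝ} {F G : X → ℝ} (hF : ContinuousOn F S) (hG : ContinuousOn G S)
    (hFG : ∀ x ∈ S, (F x : AddCircle p) = G x) {x y : X} (hx : x ∈ S) (hy : y ∈ S) :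
    F x - G x = F y - G y := by
  have hmem : MapsTo (fun z ↦ F z - G z) S (AddSubgroup.zmultiples p) := fun z hz ↦ by
    have hdiff := QuotientAddGroup.eq.1 (hFG z hz).symm
    rwa [neg_add_eq_sub] at hdiff
  exact hS.constant_of_mapsTo (SetLike.isDiscrete_iff_discreteTopology.2 inferInstance)
    (hF.sub hG) hmem hx hy

theorem exists_continuousMap_eqOn_of_eqOn_inter {X Y : Type*} [TopologicalSpace X]
    [TopologicalSpace Y] {A B : Set X} (hA : IsClosed A) (hB : IsClosed B) (hAB : A ∪ B = univ)
    {u v : X → Y} (hu : ContinuousOn u A) (hv : ContinuousOn v B) (huv : EqOn u v (A ∩ B)) :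
    ∃ f : C(X, Y), EqOn f u A ∧ EqOn f v B := by
  classical
  have hfA : EqOn (A.piecewise u v) u A := piecewise_eqOn A u v
  have hfB : EqOn (A.piecewise u v) v B := fun x hxB ↦ by
    by_cases hxA : x ∈ A
    · exact (hfA hxA).trans (huv ⟨hxA, hxB⟩)
    · exact piecewise_eq_of_notMem A u v hxA
  refine ⟨⟨A.piecewise u v, ?_⟩, hfA, hfB⟩
  rw [← continuousOn_univ, ← hAB]
  exact (hu.congr hfA).union_of_isClosed (hv.congr hfB) hA hB

/-- Unicoherence. If `A ∩ B` were split by closed sets `s` and `t`, take `g = 0` on `s` and `g = 1`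
on `t`: then `g / 2` on `A` and `-g / 2` on `B` glue to a map into `ℝ / ℤ`. For a real lift `F` of
it, `F - g / 2` is constant on `A` and `F + g / 2` is constant on `B`, which is absurd. -/
theorem isPreconnected_inter_of_union_eq_univ {X : Type*} [TopologicalSpace X] [NormalSpace X]
    [SimplyConnectedSpace X] [LocallyPathConnectedSpace X] {A B : Set X}
    (hA : IsClosed A) (hB : IsClosed B) (hA' : IsPreconnected A) (hB' : IsPreconnected B)
    (hAB : A ∪ B = univ) :
    IsPreconnected (A ∩ B) := by
  rw [isPreconnected_closed_iff]
  rintro s t hs ht hst ⟨p, hpAB, hps⟩ ⟨q, hqAB, hqt⟩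
  by_contra hdisj
  obtain ⟨g, hg0, hg1, -⟩ := exists_continuous_zero_one_of_isClosed ((hA.inter hB).inter hs)
    ((hA.inter hB).inter ht) (disjoint_left.2 fun x hxs hxt ↦ hdisj ⟨x, hxs.1, hxs.2, hxt.2⟩)
  have hg : Continuous g := g.continuous
  have hcoe : Continuous ((↑) : ℝ → AddCircle (1 : ℝ)) := continuous_quotient_mk'
  have hglue : EqOn (fun x ↦ ((g x / 2 : ℝ) : AddCircle (1 : ℝ)))
      (fun x ↦ ((-(g x / 2) : ℝ) : AddCircle (1 : ℝ))) (A ∩ B) := by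
    intro x hx
    rcases hst hx with hxs | hxt
    · simp [hg0 ⟨hx, hxs⟩]
    · simp only [hg1 ⟨hx, hxt⟩, Pi.one_apply]
      exact QuotientAddGroup.eq.2 (AddSubgroup.mem_zmultiples_iff.2 ⟨-1, by norm_num⟩)
  obtain ⟨f, hfA, hfB⟩ := exists_continuousMap_eqOn_of_eqOn_inter hA hB hAB
    (hcoe.comp (hg.div_const 2)).continuousOn (hcoe.comp (hg.div_const 2).neg).continuousOn hglue
  obtain ⟨e, he⟩ := QuotientAddGroup.mk_surjective (f p)
  obtain ⟨F, ⟨-, hF⟩, -⟩ :=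
    (AddCircle.isCoveringMap_coe (1 : ℝ)).existsUnique_continuousMap_lifts f p e he
  have hconstA : F p - g p / 2 = F q - g q / 2 :=
    sub_eq_sub_of_coe_addCircle_eq hA' F.continuous.continuousOn (hg.div_const 2).continuousOn
      (fun x hx ↦ (congrFun hF x).trans (hfA hx)) hpAB.1 hqAB.1
  have hconstB : F p - -(g p / 2) = F q - -(g q / 2) :=
    sub_eq_sub_of_coe_addCircle_eq hB' F.continuous.continuousOn (hg.div_const 2).neg.continuousOn
      (fun x hx ↦ (congrFun hF x).trans (hfB hx)) hpAB.2 hqAB.2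
  have hgp : g p = 0 := hg0 ⟨hpAB, hps⟩
  have hgq : g q = 1 := hg1 ⟨hqAB, hqt⟩
  linarith

theorem connectedComponentIn_ne_zero_of_pos {X : Type*} [TopologicalSpace X] {Φ : X → ℝ}
    (hΦ : Continuous Φ) (hpos : IsPreconnected {x | 0 < Φ x}) {x : X} (hx : 0 < Φ x) :
    connectedComponentIn {y | Φ y ≠ 0} x = {y | 0 < Φ y} := by
  refine Subset.antisymm ?_
    (hpos.subset_connectedComponentIn hx fun y (hy : 0 < Φ y) ↦ hy.ne')
  exact isPreconnected_connectedComponentIn.subset_left_of_subset_union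
    (isOpen_lt continuous_const hΦ) (isOpen_lt hΦ continuous_const)
    (disjoint_left.2 fun y (hy : 0 < Φ y) ↦ hy.asymm)
    ((connectedComponentIn_subset _ x).trans fun y (hy : Φ y ≠ 0) ↦ hy.lt_or_gt.symm)
    ⟨x, mem_connectedComponentIn (F := {y | Φ y ≠ 0}) hx.ne', hx⟩

theorem connectedComponentIn_ne_zero_of_neg {X : Type*} [TopologicalSpace X] {Φ : X → ℝ}
    (hΦ : Continuous Φ) (hneg : IsPreconnected {x | Φ x < 0}) {x : X} (hx : Φ x < 0) :
    connectedComponentIn {y | Φ y ≠ 0} x = {y | Φ y < 0} := by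
  simpa using connectedComponentIn_ne_zero_of_pos hΦ.neg (by simpa using hneg) (neg_pos.2 hx)

theorem ncard_connectedComponentIn_ne_zero {X : Type*} [TopologicalSpace X] {Φ : X → ℝ}
    (hΦ : Continuous Φ) (hpos : IsConnected {x | 0 < Φ x}) (hneg : IsConnected {x | Φ x < 0}) :
    {C : Set X | ∃ x, Φ x ≠ 0 ∧ C = connectedComponentIn {y | Φ y ≠ 0} x}.ncard = 2 := by
  have hcomp_pos {x} := connectedComponentIn_ne_zero_of_pos hΦ hpos.isPreconnected (x := x)
  have hcomp_neg {x} := connectedComponentIn_ne_zero_of_neg hΦ hneg.isPreconnected (x := x)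
  obtain ⟨a, ha⟩ := hpos.nonempty
  obtain ⟨b, hb⟩ := hneg.nonempty
  have hcomps : {C : Set X | ∃ x, Φ x ≠ 0 ∧ C = connectedComponentIn {y | Φ y ≠ 0} x} =
      {{x | 0 < Φ x}, {x | Φ x < 0}} := by
    ext C
    constructor
    · rintro ⟨x, hx, rfl⟩
      exact hx.lt_or_gt.elim (fun h ↦ Or.inr (hcomp_neg h)) fun h ↦ Or.inl (hcomp_pos h)
    · rintro (rfl | rfl)
      · exact ⟨a, ne_of_gt ha, (hcomp_pos ha).symm⟩
      · exact ⟨b, ne_of_lt hb, (hcomp_neg hb).symm⟩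
  have hne : {x | 0 < Φ x} ≠ {x | Φ x < 0} := fun h ↦
    lt_asymm (b := Φ a) ha ((Set.ext_iff.1 h a).1 ha)
  rw [hcomps, ncard_pair hne]

section Normed

variable {E : Type*} [NormedAddCommGroup E] [NormedSpace ℝ E] {Φ : E → ℝ}

theorem closure_pos_eq_of_fderiv_ne_zero (hΦ : Continuous Φ)
    (hreg : ∀ x, Φ x = 0 → fderiv ℝ Φ x ≠ 0) : closure {x | 0 < Φ x} = {x | 0 ≤ Φ x} := by
  refine Subset.antisymm (closure_lt_subset_le continuous_const hΦ) fun x (hx : 0 ≤ Φ x) ↦ ?_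
  rcases hx.lt_or_eq with hx | hx
  · exact subset_closure hx
  · by_contra hmem
    refine hreg x hx.symm (IsLocalMax.fderiv_eq_zero ?_)
    filter_upwards [isClosed_closure.isOpen_compl.mem_nhds hmem] with y hy
    exact hx ▸ not_lt.1 fun h ↦ hy (subset_closure h)

theorem isConnected_zeroSet_of_fderiv_ne_zero (hΦ : Continuous Φ)
    (hpos : IsConnected {x | 0 < Φ x}) (hneg : IsConnected {x | Φ x < 0})
    (hreg : ∀ x, Φ x = 0 → fderiv ℝ Φ x ≠ 0) : IsConnected {x | Φ x = 0} := by
  have hnonneg : IsPreconnected {x | 0 ≤ Φ x} :=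
    closure_pos_eq_of_fderiv_ne_zero hΦ hreg ▸ hpos.isPreconnected.closure
  have hnonpos : IsPreconnected {x | Φ x ≤ 0} := by
    have hcl := closure_pos_eq_of_fderiv_ne_zero hΦ.neg fun x hx ↦ by
      simpa [fderiv_neg] using hreg x (neg_eq_zero.1 hx)
    simp only [Pi.neg_apply, Left.neg_pos_iff, Left.nonneg_neg_iff] at hcl
    exact hcl ▸ hneg.isPreconnected.closure
  obtain ⟨a, ha⟩ := hpos.nonempty
  obtain ⟨b, hb⟩ := hneg.nonempty
  refine ⟨mem_range_of_exists_le_of_exists_ge hΦ ⟨b, hb.le⟩ ⟨a, ha.le⟩, ?_⟩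
  have hinter : {x | Φ x = 0} = {x | 0 ≤ Φ x} ∩ {x | Φ x ≤ 0} := by
    ext x
    exact le_antisymm_iff.trans and_comm
  rw [hinter]
  exact isPreconnected_inter_of_union_eq_univ (isClosed_le continuous_const hΦ)
    (isClosed_le hΦ continuous_const) hnonneg hnonpos (eq_univ_of_forall fun x ↦ le_total 0 (Φ x))

end Normed

end Topology

section Calculus

variable {f : ℝ → ℝ}

theorem strictMonoOn_of_deriv_nonneg_of_finite {D : Set ℝ} (hD : Convex ℝ D)
    (hf : ContinuousOn f D) (hf' : DifferentiableOn ℝ f (interior D))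
    (hderiv : ∀ x ∈ interior D, 0 ≤ deriv f x)
    (hfin : {x ∈ interior D | deriv f x = 0}.Finite) : StrictMonoOn f D := by
  have hmono := monotoneOn_of_deriv_nonneg hD hf hf' hderiv
  intro x hx y hy hxy
  refine (hmono hx hy hxy.le).lt_of_ne fun heq ↦ ?_
  have hD' : Icc x y ⊆ D := hD.ordConnected.out hx hy
  have hint : Ioo x y ⊆ interior D :=
    interior_maximal (Ioo_subset_Icc_self.trans hD') isOpen_Ioo
  refine (Ioo_infinite hxy) (hfin.subset fun z hz ↦ ⟨hint hz, ?_⟩)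
  have hconst : f =ᶠ[𝓝 z] fun _ ↦ f x := by
    filter_upwards [isOpen_Ioo.mem_nhds hz] with w hw
    have hwD := hD' (Ioo_subset_Icc_self hw)
    exact le_antisymm ((hmono hwD hy hw.2.le).trans heq.ge) (hmono hx hwD hw.1.le)
  rw [hconst.deriv_eq, deriv_const]

theorem strictMonoOn_or_strictAntiOn_of_deriv_ne_zero {D : Set ℝ} (hD : Convex ℝ D)
    (hf : ContinuousOn f D) (hf' : DifferentiableOn ℝ f (interior D))
    (hderiv : ∀ x ∈ interior D, deriv f x ≠ 0) : StrictMonoOn f D ∨ StrictAntiOn f D := by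
  have hderivAt : ∀ x ∈ interior D, HasDerivWithinAt f (deriv f x) (interior D) x := fun x hx ↦
    ((hf' x hx).differentiableAt (isOpen_interior.mem_nhds hx)).hasDerivAt.hasDerivWithinAt
  rcases hasDerivWithinAt_forall_lt_or_forall_gt_of_forall_ne hD.interior hderivAt hderiv
    with hneg | hpos
  · exact Or.inr (strictAntiOn_of_deriv_neg hD hf hneg)
  · exact Or.inl (strictMonoOn_of_deriv_pos hD hf hpos)

theorem even_deriv_of_odd (hf : f.Odd) : (deriv f).Even := fun x ↦ by
  have hneg : (fun t ↦ f (-t)) = -f := funext hf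
  have hderiv := deriv_comp_neg f x
  rwa [hneg, deriv.neg, neg_inj, eq_comm] at hderiv

/-- `ClimbsTo f z y`: along the segment from `z` to the critical point `y` of `f`, the values of `f`
stay at or above `f z`, and `f y` is strictly above it. -/
def ClimbsTo (f : ℝ → ℝ) (z y : ℝ) : Prop :=
  deriv f y = 0 ∧ f z < f y ∧ ∀ t ∈ uIcc z y, f z ≤ f t

theorem exists_climbsTo_right_or_forall_ge (hf : Differentiable ℝ f)
    (hcrit : {c | deriv f c = 0}.Finite) {z : ℝ} (hz : ∃ᶠ t in 𝓝[>] z, f z ≤ f t) :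
    (∃ y > z, ClimbsTo f z y) ∨ ∀ t ≥ z, f z ≤ f t := by
  have hmono : ∀ D : Set ℝ, Convex ℝ D → D ∈ 𝓝[>] z → z ∈ D →
      (∀ t ∈ interior D, deriv f t ≠ 0) → StrictMonoOn f D := fun D hD hDz hzD hne ↦ by
    refine (strictMonoOn_or_strictAntiOn_of_deriv_ne_zero hD hf.continuous.continuousOn
      hf.differentiableOn hne).resolve_right fun hanti ↦ ?_
    obtain ⟨t, ht, htD, htz⟩ := (hz.and_eventually
      (Filter.Eventually.and hDz self_mem_nhdsWithin)).exists
    exact (hanti hzD htD htz).not_ge ht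
  rcases eq_empty_or_nonempty {c | deriv f c = 0 ∧ z < c} with hempty | hne
  · refine Or.inr fun t ht ↦ ?_
    have hIci := hmono (Ici z) (convex_Ici z)
      (mem_of_superset self_mem_nhdsWithin Ioi_subset_Ici_self) self_mem_Ici fun t ht ht0 ↦ by
        rw [interior_Ici] at ht
        exact hempty.subset ⟨ht0, ht⟩
    exact hIci.monotoneOn self_mem_Ici ht ht
  · obtain ⟨y, ⟨hy, hzy⟩, hmin⟩ := exists_min_image _ id (hcrit.subset fun c hc ↦ hc.1) hne
    have hIcc := hmono (Icc z y) (convex_Icc z y) (Icc_mem_nhdsGT hzy) (left_mem_Icc.2 hzy.le)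
      fun t ht ht0 ↦ by
        rw [interior_Icc] at ht
        exact (hmin t ⟨ht0, ht.1⟩).not_gt ht.2
    refine Or.inl ⟨y, hzy, hy, hIcc (left_mem_Icc.2 hzy.le) (right_mem_Icc.2 hzy.le) hzy, ?_⟩
    rw [uIcc_of_le hzy.le]
    exact fun t ht ↦ hIcc.monotoneOn (left_mem_Icc.2 hzy.le) ht ht.1

theorem ClimbsTo.of_comp_neg {z y : ℝ} (h : ClimbsTo (fun t ↦ f (-t)) z y) :
    ClimbsTo f (-z) (-y) := by
  obtain ⟨hy, hlt, hle⟩ := h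
  rw [deriv_comp_neg, neg_eq_zero] at hy
  refine ⟨hy, hlt, fun t ht ↦ ?_⟩
  simpa using hle (-t) (by
    rw [← neg_neg z, ← neg_neg y, ← image_neg_uIcc]
    exact mem_image_of_mem _ ht)

theorem exists_climbsTo_left_or_forall_ge (hf : Differentiable ℝ f)
    (hcrit : {c | deriv f c = 0}.Finite) {z : ℝ} (hz : ∃ᶠ t in 𝓝[<] z, f z ≤ f t) :
    (∃ y < z, ClimbsTo f z y) ∨ ∀ t ≤ z, f z ≤ f t := by
  have hcrit' : {c | deriv (fun t ↦ f (-t)) c = 0}.Finite := by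
    refine (hcrit.preimage neg_injective.injOn).subset fun c hc ↦ ?_
    rwa [mem_ofPred_eq, deriv_comp_neg, neg_eq_zero] at hc
  have hz' : ∃ᶠ t in 𝓝[>] (-z), f (- -z) ≤ f (-t) := by
    exact tendsto_neg_nhdsLT.frequently (by simpa only [neg_neg] using hz)
  refine (exists_climbsTo_right_or_forall_ge (hf.comp differentiable_neg) hcrit' hz').imp ?_ ?_
  · rintro ⟨y, hzy, hy⟩
    exact ⟨-y, neg_lt.1 hzy, by simpa using hy.of_comp_neg⟩
  · intro h t ht
    simpa using h (-t) (neg_le_neg ht)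

theorem exists_deriv_eq_zero_le_of_lt {x y t : ℝ} (hf : Continuous f) (ht : t ∈ uIcc x y)
    (hx : f t < f x) (hy : f t < f y) : ∃ c ∈ uIoo x y, deriv f c = 0 ∧ f c ≤ f t := by
  have hends : ∀ s ∈ uIcc x y \ uIoo x y, f t < f s := by
    rintro s ⟨hs, hs'⟩
    rcases eq_endpoints_or_mem_Ioo_of_mem_Icc hs with rfl | rfl | h
    · exact min_rec' (p := fun u ↦ f t < f u) hx hy
    · exact max_rec' (p := fun u ↦ f t < f u) hx hy
    · exact (hs' h).elim
  obtain ⟨c, hc, hmin⟩ :=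
    isCompact_uIcc.exists_isMinOn_mem_subset hf.continuousOn ht hends
  have hlocal : IsLocalMin f c :=
    hmin.isLocalMin (mem_of_superset (isOpen_Ioo.mem_nhds hc) uIoo_subset_uIcc_self)
  exact ⟨c, hc, hlocal.deriv_eq_zero, hmin ht⟩

end Calculus

/-- A differentiable odd function tending to `∞` at `∞`, with finitely many critical points, whose
extrema alternate around `0` and grow in absolute value with `|x|`. It keeps exactly the features
of an odd-degree Hermite polynomial on which the connectedness argument relies. -/
structure IsGrowingOddOscillation (f : ℝ → ℝ) : Prop where
  differentiable : Differentiable ℝ f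
  odd : f.Odd
  tendsto_atTop : Tendsto f atTop atTop
  finite_crit : {c | deriv f c = 0}.Finite
  ne_zero_of_crit {c : ℝ} : deriv f c = 0 → f c ≠ 0
  isLocalMin_of_crit {c : ℝ} : deriv f c = 0 → f c < 0 → IsLocalMin f c
  abs_lt_abs {t c : ℝ} : deriv f c = 0 → |t| < |c| → |f t| < |f c|

namespace IsGrowingOddOscillation

variable {f : ℝ → ℝ}

theorem tendsto_atBot (hf : IsGrowingOddOscillation f) : Tendsto f atBot atBot := by
  have h := tendsto_neg_atTop_atBot.comp (hf.tendsto_atTop.comp tendsto_neg_atBot_atTop)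
  refine h.congr fun x ↦ ?_
  simp only [Function.comp_apply, hf.odd x, neg_neg]

theorem abs_le_abs (hf : IsGrowingOddOscillation f) {t c : ℝ} (hc : deriv f c = 0)
    (htc : |t| ≤ |c|) : |f t| ≤ |f c| := by
  rcases htc.lt_or_eq with hlt | heq
  · exact (hf.abs_lt_abs hc hlt).le
  · rcases abs_eq_abs.1 heq with rfl | rfl
    · exact le_rfl
    · rw [hf.odd, abs_neg]

theorem not_forall_le_imp_le (hf : IsGrowingOddOscillation f) (z : ℝ) : ¬ ∀ t ≤ z, f z ≤ f t := by
  intro h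
  obtain ⟨t, htz, ht⟩ := ((eventually_le_atBot z).and
    (hf.tendsto_atBot.eventually_lt_atBot (f z))).exists
  exact (h t htz).not_gt ht

theorem exists_climbsTo_or_forall_ge (hf : IsGrowingOddOscillation f) {z : ℝ}
    (hz : deriv f z ≠ 0 ∨ f z < 0) : (∃ y, ClimbsTo f z y) ∨ ∀ t ≥ z, f z ≤ f t := by
  have hfreq : ∃ᶠ t in 𝓝[≠] z, f z ≤ f t := by
    by_cases hcrit : deriv f z = 0
    · have hmin := hf.isLocalMin_of_crit hcrit (hz.resolve_left (not_not.2 hcrit))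
      exact (Eventually.filter_mono nhdsWithin_le_nhds hmin).frequently
    · intro hlt
      have hmax : IsLocalMax f z := by
        rw [IsLocalMax, IsMaxFilter, ← nhdsNE_sup_pure, eventually_sup, eventually_pure]
        exact ⟨hlt.mono fun t ht ↦ (not_le.1 ht).le, le_rfl⟩
      exact hcrit hmax.deriv_eq_zero
  rw [← nhdsLT_sup_nhdsGT, frequently_sup] at hfreq
  rcases hfreq with hleft | hright
  · obtain ⟨y, -, hy⟩ := (exists_climbsTo_left_or_forall_ge hf.differentiable hf.finite_crit
      hleft).resolve_right (hf.not_forall_le_imp_le z)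
    exact Or.inl ⟨y, hy⟩
  · exact (exists_climbsTo_right_or_forall_ge hf.differentiable hf.finite_crit hright).imp_left
      fun ⟨y, _, hy⟩ ↦ ⟨y, hy⟩

theorem exists_climbsTo_abs_lt_or_forall_ge (hf : IsGrowingOddOscillation f) {z : ℝ}
    (hz : deriv f z = 0) (hneg : f z < 0) :
    (∃ y, |z| < |y| ∧ ClimbsTo f z y) ∨ ∀ t ≥ z, f z ≤ f t := by
  have hmin : ∀ᶠ t in 𝓝 z, f z ≤ f t := hf.isLocalMin_of_crit hz hneg
  rcases le_total 0 z with h0 | h0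
  · refine (exists_climbsTo_right_or_forall_ge hf.differentiable hf.finite_crit
      (hmin.filter_mono nhdsWithin_le_nhds).frequently).imp_left ?_
    rintro ⟨y, hzy, hy⟩
    exact ⟨y, (abs_of_nonneg h0).trans_lt (hzy.trans_le (le_abs_self y)), hy⟩
  · obtain ⟨y, hyz, hy⟩ := (exists_climbsTo_left_or_forall_ge hf.differentiable hf.finite_crit
      (hmin.filter_mono nhdsWithin_le_nhds).frequently).resolve_right
      (hf.not_forall_le_imp_le z)
    exact Or.inl ⟨y, (abs_of_nonpos h0).trans_lt ((neg_lt_neg hyz).trans_le (neg_le_abs y)), hy⟩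

end IsGrowingOddOscillation

/-- The function `(x, y) ↦ a f(x) + b f(y)`; for `f = H n`, `a = cos θ` and `b = sin θ` it is the
polynomial factor of `Phi n θ`. -/
def weightedSum (f : ℝ → ℝ) (a b : ℝ) (p : ℝ × ℝ) : ℝ := a * f p.1 + b * f p.2

/-- The open set on which `weightedSum f a b` is positive. -/
def posRegion (f : ℝ → ℝ) (a b : ℝ) : Set (ℝ × ℝ) := {p | 0 < weightedSum f a b p}

/-- The weights are so close in absolute value that replacing them by `1` does not change the order
of two distinct critical values of `f` in absolute value. -/
def PreservesCriticalOrder (f : ℝ → ℝ) (a b : ℝ) : Prop :=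
  ∀ c d, deriv f c = 0 → deriv f d = 0 → |f c| < |f d| →
    |a| * |f c| < |b| * |f d| ∧ |b| * |f c| < |a| * |f d|

theorem PreservesCriticalOrder.swap {f : ℝ → ℝ} {a b : ℝ} (h : PreservesCriticalOrder f a b) :
    PreservesCriticalOrder f b a :=
  fun c d hc hd hcd ↦ (h c d hc hd hcd).symm

theorem joinedIn_of_forall_uIcc_right {S : Set (ℝ × ℝ)} {x y y' : ℝ}
    (h : ∀ t ∈ uIcc y y', (x, t) ∈ S) : JoinedIn S (x, y) (x, y') := by
  refine JoinedIn.of_segment_subset ?_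
  rw [← Prod.image_mk_segment_right, segment_eq_uIcc, image_subset_iff]
  exact h

theorem joinedIn_of_forall_uIcc_left {S : Set (ℝ × ℝ)} {x x' y : ℝ}
    (h : ∀ t ∈ uIcc x x', (t, y) ∈ S) : JoinedIn S (x, y) (x', y) := by
  refine JoinedIn.of_segment_subset ?_
  rw [← Prod.image_mk_segment_left, segment_eq_uIcc, image_subset_iff]
  exact h

section PosRegion

variable {f : ℝ → ℝ} {a b R x y : ℝ}

theorem weightedSum_swap (p : ℝ × ℝ) : weightedSum f b a p.swap = weightedSum f a b p :=
  add_comm _ _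

theorem mem_posRegion : (x, y) ∈ posRegion f a b ↔ 0 < a * f x + b * f y := Iff.rfl

theorem mem_posRegion_of_le_right {y' : ℝ} (hb : 0 ≤ b) (hxy : (x, y) ∈ posRegion f a b)
    (hle : f y ≤ f y') : (x, y') ∈ posRegion f a b := by
  rw [mem_posRegion] at hxy ⊢
  exact hxy.trans_le (by gcongr)

theorem joinedIn_posRegion_swap {p q : ℝ × ℝ} (h : JoinedIn (posRegion f a b) p q) :
    JoinedIn (posRegion f b a) p.swap q.swap := by
  refine (h.map continuous_swap).mono ?_
  rintro - ⟨r, hr, rfl⟩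
  rwa [posRegion, mem_ofPred_eq, weightedSum_swap]

theorem joinedIn_posRegion_of_climbsTo {y' : ℝ} (hb : 0 ≤ b) (hxy : (x, y) ∈ posRegion f a b)
    (hy : ClimbsTo f y y') : JoinedIn (posRegion f a b) (x, y) (x, y') :=
  joinedIn_of_forall_uIcc_right fun t ht ↦ mem_posRegion_of_le_right hb hxy (hy.2.2 t ht)

theorem isPathConnected_posRegion_neg_left (hodd : f.Odd)
    (h : IsPathConnected (posRegion f a b)) : IsPathConnected (posRegion f (-a) b) := by
  have hpre := ((Homeomorph.neg ℝ).prodCongr (Homeomorph.refl ℝ)).isPathConnected_preimage.2 h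
  convert hpre using 1
  ext p
  simp [posRegion, weightedSum, hodd p.1]

theorem isPathConnected_posRegion_neg_right (hodd : f.Odd)
    (h : IsPathConnected (posRegion f a b)) : IsPathConnected (posRegion f a (-b)) := by
  have hpre := ((Homeomorph.refl ℝ).prodCongr (Homeomorph.neg ℝ)).isPathConnected_preimage.2 h
  convert hpre using 1
  ext p
  simp [posRegion, weightedSum, hodd p.2]

theorem isPathConnected_posRegion_of_abs (hodd : f.Odd)
    (h : IsPathConnected (posRegion f |a| |b|)) : IsPathConnected (posRegion f a b) := by
  have hleft : IsPathConnected (posRegion f a |b|) := by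
    rcases abs_choice a with ha | ha
    · rwa [ha] at h
    · simpa only [ha, neg_neg] using isPathConnected_posRegion_neg_left hodd h
  rcases abs_choice b with hb | hb
  · rwa [hb] at hleft
  · simpa only [hb, neg_neg] using isPathConnected_posRegion_neg_right hodd hleft

theorem joinedIn_posRegion_corner_of_forall_ge (hf : IsGrowingOddOscillation f) (ha : 0 < a)
    (hb : 0 < b) (hR : ∀ t ≥ R, 0 < f t) (hray : ∀ t ≥ y, (x, t) ∈ posRegion f a b) :
    JoinedIn (posRegion f a b) (x, y) (R, R) := by
  obtain ⟨s, -, hs⟩ := isCompact_uIcc.exists_isMinOn (nonempty_uIcc (a := x) (b := R))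
    hf.differentiable.continuous.continuousOn
  obtain ⟨T, hTy, hTR, hT⟩ := ((eventually_ge_atTop y).and ((eventually_ge_atTop R).and
    ((hf.tendsto_atTop.const_mul_atTop hb).eventually_gt_atTop (-(a * f s))))).exists
  have hup : JoinedIn (posRegion f a b) (x, y) (x, T) :=
    joinedIn_of_forall_uIcc_right fun t ht ↦ hray t (by simpa [hTy] using ht.1)
  have hacross : JoinedIn (posRegion f a b) (x, T) (R, T) :=
    joinedIn_of_forall_uIcc_left fun t ht ↦ by
      have hst : a * f s ≤ a * f t := by gcongr; exact hs ht
      exact mem_posRegion.2 (by linarith)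
  have hdown : JoinedIn (posRegion f a b) (R, T) (R, R) :=
    joinedIn_of_forall_uIcc_right fun t ht ↦
      add_pos (mul_pos ha (hR R le_rfl)) (mul_pos hb (hR t (by simpa [hTR] using ht.1)))
  exact (hup.trans hacross).trans hdown

/-- From `p`, a path in `posRegion f a b` leads to the corner `(R, R)`, or to a point with critical
coordinates at which `weightedSum f a b` is larger than at `p`. -/
def ReachesHigher (f : ℝ → ℝ) (a b R : ℝ) (p : ℝ × ℝ) : Prop :=
  JoinedIn (posRegion f a b) p (R, R) ∨
    ∃ q : ℝ × ℝ, deriv f q.1 = 0 ∧ deriv f q.2 = 0 ∧ JoinedIn (posRegion f a b) p q ∧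
      weightedSum f a b p < weightedSum f a b q

theorem ReachesHigher.swap {p : ℝ × ℝ} (h : ReachesHigher f a b R p) :
    ReachesHigher f b a R p.swap := by
  refine h.imp joinedIn_posRegion_swap ?_
  rintro ⟨q, hq₁, hq₂, hpq, hlt⟩
  refine ⟨q.swap, hq₂, hq₁, joinedIn_posRegion_swap hpq, ?_⟩
  rwa [weightedSum_swap, weightedSum_swap]

theorem ReachesHigher.of_joinedIn {p q : ℝ × ℝ} (hpq : JoinedIn (posRegion f a b) p q)
    (hle : weightedSum f a b p ≤ weightedSum f a b q) (h : ReachesHigher f a b R q) :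
    ReachesHigher f a b R p := by
  refine h.imp hpq.trans ?_
  rintro ⟨r, hr₁, hr₂, hqr, hlt⟩
  exact ⟨r, hr₁, hr₂, hpq.trans hqr, hle.trans_lt hlt⟩

theorem joinedIn_corner_or_exists_climbsTo_right (hf : IsGrowingOddOscillation f) (ha : 0 < a)
    (hb : 0 < b) (hR : ∀ t ≥ R, 0 < f t) (hxy : (x, y) ∈ posRegion f a b)
    (hy : deriv f y ≠ 0 ∨ f y < 0) :
    JoinedIn (posRegion f a b) (x, y) (R, R) ∨
      ∃ y', ClimbsTo f y y' ∧ JoinedIn (posRegion f a b) (x, y) (x, y') := by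
  rcases hf.exists_climbsTo_or_forall_ge hy with ⟨y', hy'⟩ | hray
  · exact Or.inr ⟨y', hy', joinedIn_posRegion_of_climbsTo hb.le hxy hy'⟩
  · refine Or.inl (joinedIn_posRegion_corner_of_forall_ge hf ha hb hR fun t ht ↦ ?_)
    exact mem_posRegion_of_le_right hb.le hxy (hray t ht)

theorem reachesHigher_of_neg_right (hf : IsGrowingOddOscillation f) (ha : 0 < a) (hb : 0 < b)
    (hR : ∀ t ≥ R, 0 < f t) (hxy : (x, y) ∈ posRegion f a b) (hx : deriv f x = 0)
    (hy : f y < 0) : ReachesHigher f a b R (x, y) := by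
  refine (joinedIn_corner_or_exists_climbsTo_right hf ha hb hR hxy (Or.inr hy)).imp_right ?_
  rintro ⟨y', hy', hjoin⟩
  refine ⟨(x, y'), hx, hy'.1, hjoin, ?_⟩
  rw [weightedSum, weightedSum]
  gcongr
  exact hy'.2.1

theorem joinedIn_posRegion_diagonal (hf : IsGrowingOddOscillation f) (ha : 0 < a) (hb : 0 < b)
    (hab : PreservesCriticalOrder f a b) (hy : deriv f y = 0) (hfx : 0 < f x) (hfy : 0 < f y)
    (hxy : |x| ≤ |y|) : JoinedIn (posRegion f a b) (x, y) (y, y) := by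
  refine joinedIn_of_forall_uIcc_left fun t ht ↦ mem_posRegion.2 ?_
  rcases le_or_gt 0 (f t) with hft | hft
  · positivity
  obtain ⟨c, hc, hderiv, hct⟩ := exists_deriv_eq_zero_le_of_lt hf.differentiable.continuous ht
    (hft.trans hfx) (hft.trans hfy)
  have hcy : |c| < |y| := by
    rw [uIoo, mem_Ioo, inf_lt_iff, lt_sup_iff] at hc
    grind
  have hweights := (hab c y hderiv hy (hf.abs_lt_abs hy hcy)).1
  rw [abs_of_pos ha, abs_of_pos hb, abs_of_pos hfy, abs_of_neg (hct.trans_lt hft)] at hweights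
  have hact : a * f c ≤ a * f t := by gcongr
  linarith

theorem reachesHigher_diagonal_of_lt {z : ℝ} (hf : IsGrowingOddOscillation f) (hb : 0 < b)
    (hba : b < a) (hR : ∀ t ≥ R, 0 < f t) (hz : deriv f z = 0) (hfz : 0 < f z) :
    ReachesHigher f a b R (z, z) := by
  have ha : 0 < a := hb.trans hba
  have hreflect : JoinedIn (posRegion f a b) (z, z) (z, -z) := by
    refine joinedIn_of_forall_uIcc_right fun t ht ↦ mem_posRegion.2 ?_
    have htz : |t| ≤ |z| := by
      rcases mem_uIcc.1 ht with h | h <;> grind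
    have hft : -f z ≤ f t := by
      have habs := (abs_le.1 (hf.abs_le_abs hz htz)).1
      rwa [abs_of_pos hfz] at habs
    calc 0 < (a - b) * f z := mul_pos (sub_pos.2 hba) hfz
      _ = a * f z + b * -f z := by ring
      _ ≤ a * f z + b * f t := by gcongr
  have hfz' : f (-z) = -f z := hf.odd z
  have hz' : deriv f (-z) = 0 := (even_deriv_of_odd hf.odd z).trans hz
  rcases hf.exists_climbsTo_abs_lt_or_forall_ge hz' (by linarith) with ⟨y, hzy, hy⟩ | hray
  · have hlt : f z < f y := by
      have habs := hf.abs_lt_abs hy.1 hzy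
      rw [hfz', abs_neg, abs_of_pos hfz] at habs
      rcases lt_abs.1 habs with hpos | hneg
      · exact hpos
      · linarith [hy.2.1]
    refine Or.inr ⟨(z, y), hz, hy.1,
      hreflect.trans (joinedIn_posRegion_of_climbsTo hb.le hreflect.target_mem hy), ?_⟩
    rw [weightedSum, weightedSum]
    gcongr
  · refine Or.inl (hreflect.trans (joinedIn_posRegion_corner_of_forall_ge hf ha hb hR ?_))
    exact fun t ht ↦ mem_posRegion_of_le_right hb.le hreflect.target_mem (hray t ht)

theorem reachesHigher_diagonal {z : ℝ} (hf : IsGrowingOddOscillation f) (ha : 0 < a) (hb : 0 < b)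
    (hab : a ≠ b) (hR : ∀ t ≥ R, 0 < f t) (hz : deriv f z = 0) (hfz : 0 < f z) :
    ReachesHigher f a b R (z, z) := by
  rcases hab.lt_or_gt with h | h
  · exact (reachesHigher_diagonal_of_lt hf ha h hR hz hfz).swap
  · exact reachesHigher_diagonal_of_lt hf hb h hR hz hfz

theorem reachesHigher_of_abs_le (hf : IsGrowingOddOscillation f) (ha : 0 < a) (hb : 0 < b)
    (hne : a ≠ b) (hab : PreservesCriticalOrder f a b) (hR : ∀ t ≥ R, 0 < f t)
    (hy : deriv f y = 0) (hfx : 0 < f x) (hfy : 0 < f y) (hxy : |x| ≤ |y|) :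
    ReachesHigher f a b R (x, y) := by
  refine ReachesHigher.of_joinedIn (joinedIn_posRegion_diagonal hf ha hb hab hy hfx hfy hxy) ?_
    (reachesHigher_diagonal hf ha hb hne hR hy hfy)
  have hle : f x ≤ f y := by
    simpa only [abs_of_pos hfx, abs_of_pos hfy] using hf.abs_le_abs hy hxy
  rw [weightedSum, weightedSum]
  gcongr

theorem reachesHigher_of_crit (hf : IsGrowingOddOscillation f) (ha : 0 < a) (hb : 0 < b)
    (hne : a ≠ b) (hab : PreservesCriticalOrder f a b) (hR : ∀ t ≥ R, 0 < f t)
    (hxy : (x, y) ∈ posRegion f a b) (hx : deriv f x = 0) (hy : deriv f y = 0) :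
    ReachesHigher f a b R (x, y) := by
  rcases (hf.ne_zero_of_crit hy).lt_or_gt with hfy | hfy
  · exact reachesHigher_of_neg_right hf ha hb hR hxy hx hfy
  rcases (hf.ne_zero_of_crit hx).lt_or_gt with hfx | hfx
  · have hyx : (y, x) ∈ posRegion f b a := by rwa [mem_posRegion, add_comm]
    exact (reachesHigher_of_neg_right hf hb ha hR hyx hy hfx).swap
  rcases le_total |x| |y| with h | h
  · exact reachesHigher_of_abs_le hf ha hb hne hab hR hy hfx hfy h
  · exact (reachesHigher_of_abs_le hf hb ha hne.symm hab.swap hR hx hfy hfx h).swap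

theorem joinedIn_corner_or_exists_crit_right (hf : IsGrowingOddOscillation f) (ha : 0 < a)
    (hb : 0 < b) (hR : ∀ t ≥ R, 0 < f t) (hxy : (x, y) ∈ posRegion f a b) :
    JoinedIn (posRegion f a b) (x, y) (R, R) ∨
      ∃ y', deriv f y' = 0 ∧ JoinedIn (posRegion f a b) (x, y) (x, y') := by
  by_cases hy : deriv f y = 0
  · exact Or.inr ⟨y, hy, JoinedIn.refl hxy⟩
  · exact (joinedIn_corner_or_exists_climbsTo_right hf ha hb hR hxy (Or.inl hy)).imp_right
      fun ⟨y', hy', hjoin⟩ ↦ ⟨y', hy'.1, hjoin⟩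

theorem joinedIn_corner_or_exists_crit (hf : IsGrowingOddOscillation f) (ha : 0 < a)
    (hb : 0 < b) (hR : ∀ t ≥ R, 0 < f t) {p : ℝ × ℝ} (hp : p ∈ posRegion f a b) :
    JoinedIn (posRegion f a b) p (R, R) ∨
      ∃ q : ℝ × ℝ, deriv f q.1 = 0 ∧ deriv f q.2 = 0 ∧ JoinedIn (posRegion f a b) p q := by
  rcases joinedIn_corner_or_exists_crit_right hf ha hb hR hp with h | ⟨y, hy, hvert⟩
  · exact Or.inl h
  have hswap := (joinedIn_posRegion_swap hvert).target_mem
  refine (joinedIn_corner_or_exists_crit_right hf hb ha hR hswap).imp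
    (fun h ↦ hvert.trans (joinedIn_posRegion_swap h)) ?_
  rintro ⟨x, hx, hhoriz⟩
  exact ⟨(x, y), hx, hy, hvert.trans (joinedIn_posRegion_swap hhoriz)⟩

theorem joinedIn_posRegion_corner (hf : IsGrowingOddOscillation f) (ha : 0 < a) (hb : 0 < b)
    (hne : a ≠ b) (hab : PreservesCriticalOrder f a b) (hR : ∀ t ≥ R, 0 < f t) {p : ℝ × ℝ}
    (hp : p ∈ posRegion f a b) : JoinedIn (posRegion f a b) p (R, R) := by
  rcases joinedIn_corner_or_exists_crit hf ha hb hR hp with h | hreach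
  · exact h
  have hfin : {q : ℝ × ℝ | deriv f q.1 = 0 ∧ deriv f q.2 = 0 ∧
      JoinedIn (posRegion f a b) p q}.Finite :=
    (hf.finite_crit.prod hf.finite_crit).subset fun q hq ↦ ⟨hq.1, hq.2.1⟩
  obtain ⟨q, ⟨hq₁, hq₂, hpq⟩, hmax⟩ := exists_max_image _ (weightedSum f a b) hfin hreach
  rcases reachesHigher_of_crit hf ha hb hne hab hR hpq.target_mem hq₁ hq₂ with
    hcorner | ⟨r, hr₁, hr₂, hqr, hlt⟩
  · exact hpq.trans hcorner
  · exact absurd hlt (hmax r ⟨hr₁, hr₂, hpq.trans hqr⟩).not_gt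

theorem isPathConnected_posRegion (hf : IsGrowingOddOscillation f) (ha : a ≠ 0) (hb : b ≠ 0)
    (hne : |a| ≠ |b|) (hab : PreservesCriticalOrder f a b) :
    IsPathConnected (posRegion f a b) := by
  refine isPathConnected_posRegion_of_abs hf.odd ?_
  have ha' := abs_pos.2 ha
  have hb' := abs_pos.2 hb
  obtain ⟨R, hR⟩ := eventually_atTop.1 (hf.tendsto_atTop.eventually_gt_atTop 0)
  have hab' : PreservesCriticalOrder f |a| |b| := by
    simpa only [PreservesCriticalOrder, abs_abs] using hab
  exact ⟨(R, R), add_pos (mul_pos ha' (hR R le_rfl)) (mul_pos hb' (hR R le_rfl)),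
    fun _ hp ↦ (joinedIn_posRegion_corner hf ha' hb' hne hab' hR hp).symm⟩

end PosRegion

section Regularity

theorem fderiv_mul_ne_zero_of_left_eq_zero {E : Type*} [NormedAddCommGroup E] [NormedSpace ℝ E]
    {g w : E → ℝ} {p : E} (hg : DifferentiableAt ℝ g p) (hw : DifferentiableAt ℝ w p)
    (hgp : g p = 0) (hwp : w p ≠ 0) (hg' : fderiv ℝ g p ≠ 0) :
    fderiv ℝ (fun q ↦ g q * w q) p ≠ 0 := by
  rw [fderiv_fun_mul hg hw, hgp, zero_smul, zero_add]
  exact smul_ne_zero hwp hg'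

variable {f : ℝ → ℝ} {a b : ℝ} {p : ℝ × ℝ}

theorem hasFDerivAt_weightedSum (hf : Differentiable ℝ f) : HasFDerivAt (weightedSum f a b)
    ((a * deriv f p.1) • ContinuousLinearMap.fst ℝ ℝ ℝ +
      (b * deriv f p.2) • ContinuousLinearMap.snd ℝ ℝ ℝ) p := by
  have hfst := (hf p.1).hasDerivAt.comp_hasFDerivAt p (hasFDerivAt_fst (𝕜 := ℝ) (p := p))
  have hsnd := (hf p.2).hasDerivAt.comp_hasFDerivAt p (hasFDerivAt_snd (𝕜 := ℝ) (p := p))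
  simpa only [smul_smul] using! (hfst.const_mul a).add (hsnd.const_mul b)

theorem weightedSum_ne_zero_of_crit (hf : IsGrowingOddOscillation f) (hne : |a| ≠ |b|)
    (hab : PreservesCriticalOrder f a b) (h₁ : deriv f p.1 = 0) (h₂ : deriv f p.2 = 0) :
    weightedSum f a b p ≠ 0 := by
  intro h0
  have habs : |a| * |f p.1| = |b| * |f p.2| := by
    rw [← abs_mul, ← abs_mul, eq_neg_of_add_eq_zero_left h0, abs_neg]
  rcases lt_trichotomy |f p.1| |f p.2| with hlt | heq | hgt
  · exact (hab _ _ h₁ h₂ hlt).1.ne habs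
  · rw [heq] at habs
    exact hne (mul_right_cancel₀ (abs_ne_zero.2 (hf.ne_zero_of_crit h₂)) habs)
  · exact (hab _ _ h₂ h₁ hgt).2.ne' habs

theorem fderiv_weightedSum_ne_zero (hf : IsGrowingOddOscillation f) (ha : a ≠ 0) (hb : b ≠ 0)
    (hne : |a| ≠ |b|) (hab : PreservesCriticalOrder f a b) (hp : weightedSum f a b p = 0) :
    fderiv ℝ (weightedSum f a b) p ≠ 0 := by
  intro h0
  rw [(hasFDerivAt_weightedSum hf.differentiable).fderiv] at h0
  have h₁ : deriv f p.1 = 0 := by simpa [ha] using congr($h0 (1, 0))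
  have h₂ : deriv f p.2 = 0 := by simpa [hb] using congr($h0 (0, 1))
  exact weightedSum_ne_zero_of_crit hf hne hab h₁ h₂ hp

end Regularity

section NearbyWeights

theorem eventually_preservesCriticalOrder {f : ℝ → ℝ} (hcrit : {c | deriv f c = 0}.Finite)
    {a b : ℝ} (hab : |a| = |b|) (hb : b ≠ 0) :
    ∀ᶠ w : ℝ × ℝ in 𝓝 (a, b), PreservesCriticalOrder f w.1 w.2 := by
  have hpair : ∀ c d : ℝ, |f c| < |f d| → ∀ᶠ w : ℝ × ℝ in 𝓝 (a, b),
      |w.1| * |f c| < |w.2| * |f d| ∧ |w.2| * |f c| < |w.1| * |f d| := fun c d hcd ↦ by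
    have hlt : |b| * |f c| < |b| * |f d| := mul_lt_mul_of_pos_left hcd (abs_pos.2 hb)
    refine (ContinuousAt.eventually_lt (by fun_prop) (by fun_prop) ?_).and
      (ContinuousAt.eventually_lt (by fun_prop) (by fun_prop) ?_)
    · simpa only [hab] using hlt
    · simpa only [hab] using hlt
  have hall : ∀ᶠ w : ℝ × ℝ in 𝓝 (a, b), ∀ c ∈ {c | deriv f c = 0}, ∀ d ∈ {d | deriv f d = 0},
      |f c| < |f d| → |w.1| * |f c| < |w.2| * |f d| ∧ |w.2| * |f c| < |w.1| * |f d| := by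
    simp only [eventually_all_finite hcrit, eventually_imp_distrib_left]
    exact fun c _ d _ ↦ hpair c d
  exact hall.mono fun w hw c d hc hd ↦ hw c hc d hd

theorem abs_cos_eq_abs_sin_iff (θ : ℝ) : |Real.cos θ| = |Real.sin θ| ↔ Real.cos (2 * θ) = 0 := by
  rw [← sq_eq_sq_iff_abs_eq_abs, Real.cos_two_mul', sub_eq_zero]

theorem eventually_abs_cos_ne_abs_sin {θ₀ : ℝ} (h : |Real.cos θ₀| = |Real.sin θ₀|) :
    ∀ᶠ θ in 𝓝[≠] θ₀, |Real.cos θ| ≠ |Real.sin θ| := by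
  have hcos : Real.cos (2 * θ₀) = 0 := (abs_cos_eq_abs_sin_iff θ₀).1 h
  have hderiv : HasDerivAt (fun θ ↦ Real.cos (2 * θ)) (-Real.sin (2 * θ₀) * (2 * 1)) θ₀ :=
    ((hasDerivAt_id θ₀).const_mul 2).cos
  have hsin : Real.sin (2 * θ₀) ≠ 0 := fun hsin ↦ by
    simpa [hcos, hsin] using Real.sin_sq_add_cos_sq (2 * θ₀)
  simpa only [ne_eq, abs_cos_eq_abs_sin_iff] using
    hderiv.eventually_ne (c := 0) (mul_ne_zero (neg_ne_zero.2 hsin) (by norm_num))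

theorem cos_ne_zero_of_abs_cos_eq_abs_sin {θ : ℝ} (h : |Real.cos θ| = |Real.sin θ|) :
    Real.cos θ ≠ 0 := by
  intro hcos
  rw [hcos, abs_zero, eq_comm, abs_eq_zero] at h
  simpa [hcos, h] using Real.sin_sq_add_cos_sq θ

theorem sin_ne_zero_of_abs_cos_eq_abs_sin {θ : ℝ} (h : |Real.cos θ| = |Real.sin θ|) :
    Real.sin θ ≠ 0 :=
  abs_ne_zero.1 (h ▸ abs_ne_zero.2 (cos_ne_zero_of_abs_cos_eq_abs_sin h))

end NearbyWeights

section HermiteEquation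

/-- The Sonin function of a solution of Hermite's equation `f'' - 2 x f' + 2 N f = 0`. It increases
on `[0, ∞)` and is equal to `f ^ 2` at the critical points of `f`. -/
noncomputable def soninFunction (f : ℝ → ℝ) (N x : ℝ) : ℝ := f x ^ 2 + deriv f x ^ 2 / (2 * N)

variable {f : ℝ → ℝ} {N : ℝ}

theorem sq_le_soninFunction (hN : 0 < N) (x : ℝ) : f x ^ 2 ≤ soninFunction f N x :=
  le_add_of_nonneg_right (by positivity)

theorem soninFunction_of_crit {c : ℝ} (hc : deriv f c = 0) : soninFunction f N c = f c ^ 2 := by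
  simp [soninFunction, hc]

theorem soninFunction_abs (hodd : f.Odd) (x : ℝ) :
    soninFunction f N |x| = soninFunction f N x := by
  rcases abs_choice x with h | h
  · rw [h]
  · rw [h, soninFunction, hodd x, even_deriv_of_odd hodd x, neg_sq, soninFunction]

theorem hasDerivAt_soninFunction (hN : N ≠ 0) (hf : Differentiable ℝ f)
    (hf' : Differentiable ℝ (deriv f))
    (hode : ∀ x, deriv (deriv f) x = 2 * x * deriv f x - 2 * N * f x) (x : ℝ) :
    HasDerivAt (soninFunction f N) (2 * x * deriv f x ^ 2 / N) x := by
  have h := ((hf x).hasDerivAt.pow 2).add (((hf' x).hasDerivAt.pow 2).div_const (2 * N))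
  refine h.congr_deriv ?_
  rw [hode]
  field_simp
  ring

theorem strictMonoOn_soninFunction (hN : 0 < N) (hf : Differentiable ℝ f)
    (hf' : Differentiable ℝ (deriv f))
    (hode : ∀ x, deriv (deriv f) x = 2 * x * deriv f x - 2 * N * f x)
    (hcrit : {c | deriv f c = 0}.Finite) : StrictMonoOn (soninFunction f N) (Ici 0) := by
  have hderiv := hasDerivAt_soninFunction hN.ne' hf hf' hode
  refine strictMonoOn_of_deriv_nonneg_of_finite (convex_Ici 0)
    (fun x _ ↦ (hderiv x).continuousAt.continuousWithinAt)
    (fun x _ ↦ (hderiv x).differentiableAt.differentiableWithinAt) ?_ (hcrit.subset ?_)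
  · intro x hx
    rw [interior_Ici, mem_Ioi] at hx
    rw [(hderiv x).deriv]
    positivity
  · rintro x ⟨hx, h0⟩
    rw [interior_Ici, mem_Ioi] at hx
    rw [(hderiv x).deriv] at h0
    simpa [hx.ne', hN.ne'] using h0

theorem abs_lt_abs_of_hermite_equation (hN : 0 < N) (hf : Differentiable ℝ f)
    (hf' : Differentiable ℝ (deriv f))
    (hode : ∀ x, deriv (deriv f) x = 2 * x * deriv f x - 2 * N * f x) (hodd : f.Odd)
    (hcrit : {c | deriv f c = 0}.Finite) {t c : ℝ} (hc : deriv f c = 0) (htc : |t| < |c|) :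
    |f t| < |f c| := by
  refine sq_lt_sq.1 ?_
  calc f t ^ 2 ≤ soninFunction f N t := sq_le_soninFunction hN t
    _ = soninFunction f N |t| := (soninFunction_abs hodd t).symm
    _ < soninFunction f N |c| :=
      strictMonoOn_soninFunction hN hf hf' hode hcrit (abs_nonneg t) (abs_nonneg c) htc
    _ = soninFunction f N c := soninFunction_abs hodd c
    _ = f c ^ 2 := soninFunction_of_crit hc

theorem isLocalMin_of_hermite_equation (hN : 0 < N) (hf : Differentiable ℝ f)
    (hode : ∀ x, deriv (deriv f) x = 2 * x * deriv f x - 2 * N * f x) {c : ℝ}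
    (hc : deriv f c = 0) (hneg : f c < 0) : IsLocalMin f c := by
  refine isLocalMin_of_deriv_deriv_pos ?_ hc (hf c).continuousAt
  rw [hode, hc, mul_zero, zero_sub, ← mul_neg]
  exact mul_pos (by positivity) (neg_pos.2 hneg)

end HermiteEquation

section Hermite

open Polynomial

theorem H_add_two (n : ℕ) : H (n + 2) = C 2 * X * H (n + 1) - C (2 * (n + 1) : ℝ) * H n := rfl

theorem derivative_H_add_one (n : ℕ) : derivative (H (n + 1)) = C (2 * (n + 1) : ℝ) * H n := by
  induction n using Nat.twoStepInduction with
  | zero => simp [H]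
  | one =>
    simp only [H, CharP.cast_eq_zero, zero_add, mul_one, derivative_sub, derivative_mul,
      derivative_C, zero_mul, derivative_X, sub_zero, Nat.cast_one, map_mul, map_add, map_one]
    ring
  | more k ih₁ ih₂ =>
    rw [H_add_two (k + 1)]
    simp only [derivative_sub, derivative_mul, derivative_C, derivative_X, ih₁, ih₂]
    rw [H_add_two k]
    simp only [map_add, map_mul, map_one, map_ofNat, Nat.cast_add, Nat.cast_one, Nat.cast_ofNat]
    ring

theorem H_add_one (n : ℕ) : H (n + 1) = C 2 * X * H n - derivative (H n) := by
  cases n with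
  | zero => simp [H]
  | succ k => rw [H_add_two, derivative_H_add_one]

theorem derivative_derivative_H (n : ℕ) :
    derivative (derivative (H n)) = C 2 * X * derivative (H n) - C (2 * n : ℝ) * H n := by
  have h := derivative_H_add_one n
  rw [H_add_one] at h
  simp only [derivative_sub, derivative_mul, derivative_C, derivative_X, map_add, map_mul, map_one]
    at h ⊢
  linear_combination -h

theorem eval_neg_H (n : ℕ) (x : ℝ) : (H n).eval (-x) = (-1) ^ n * (H n).eval x := by
  induction n using Nat.twoStepInduction with
  | zero => simp [H]
  | one => simp [H]
  | more k ih₁ ih₂ =>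
    simp only [H_add_two, eval_sub, eval_mul, eval_C, eval_X, ih₁, ih₂]
    ring

theorem eval_H_ne_zero_of_eval_H_add_one_eq_zero {n : ℕ} {x : ℝ} (h : (H (n + 1)).eval x = 0) :
    (H n).eval x ≠ 0 := by
  induction n with
  | zero => simp [H]
  | succ k ih =>
    intro h0
    rw [H_add_two] at h
    have hk : (k : ℝ) + 1 ≠ 0 := by positivity
    exact ih h0 (by simpa [h0, hk] using h)

theorem natDegree_H_le (n : ℕ) : (H n).natDegree ≤ n := by
  induction n with
  | zero => simp [H]
  | succ k ih =>
    rw [H_add_one]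
    refine (natDegree_sub_le _ _).trans (max_le ?_ ?_)
    · refine natDegree_mul_le.trans ?_
      have hX := (natDegree_C_mul_le (2 : ℝ) X).trans natDegree_X_le
      lia
    · exact (natDegree_derivative_le _).trans (by lia)

theorem coeff_H_self (n : ℕ) : (H n).coeff n = 2 ^ n := by
  induction n with
  | zero => simp [H]
  | succ k ih =>
    have hlt : (H k).natDegree < k + 2 := (natDegree_H_le k).trans_lt (by lia)
    rw [H_add_one, coeff_sub, mul_assoc, coeff_C_mul, coeff_X_mul, ih, coeff_derivative,
      coeff_eq_zero_of_natDegree_lt hlt]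
    ring

theorem natDegree_H (n : ℕ) : (H n).natDegree = n := by
  refine le_antisymm (natDegree_H_le n) (le_natDegree_of_ne_zero ?_)
  rw [coeff_H_self]
  positivity

theorem tendsto_eval_H_atTop {n : ℕ} (hn : n ≠ 0) :
    Tendsto (fun x ↦ (H n).eval x) atTop atTop := by
  refine tendsto_atTop_of_leadingCoeff_nonneg _ ?_ ?_
  · rwa [← natDegree_pos_iff_degree_pos, natDegree_H, Nat.pos_iff_ne_zero]
  · rw [leadingCoeff, natDegree_H, coeff_H_self]
    positivity

theorem finite_crit_H {n : ℕ} (hn : n ≠ 0) : {c | deriv (fun x ↦ (H n).eval x) c = 0}.Finite := by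
  have hne : derivative (H n) ≠ 0 := fun h ↦ 
    hn ((natDegree_H n).symm.trans (derivative_eq_zero.1 h))
  simpa only [Polynomial.deriv] using! finite_setOfPred_isRoot hne

theorem eval_H_ne_zero_of_deriv_eq_zero {n : ℕ} {c : ℝ}
    (hc : deriv (fun x ↦ (H n).eval x) c = 0) : (H n).eval c ≠ 0 := by
  cases n with
  | zero => simp [H]
  | succ k =>
    have hk : (k : ℝ) + 1 ≠ 0 := by positivity
    rw [Polynomial.deriv, derivative_H_add_one, eval_C_mul] at hc
    exact fun h ↦ eval_H_ne_zero_of_eval_H_add_one_eq_zero h (by simpa [hk] using hc)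

theorem isGrowingOddOscillation_H {n : ℕ} (hn : Odd n) :
    IsGrowingOddOscillation fun x ↦ (H n).eval x := by
  have hN : (0 : ℝ) < n := Nat.cast_pos.2 hn.pos
  have hderiv : (deriv fun x ↦ (H n).eval x) = fun x ↦ (derivative (H n)).eval x :=
    funext fun _ ↦ Polynomial.deriv _
  have hf := (H n).differentiable
  have hf' : Differentiable ℝ (deriv fun x ↦ (H n).eval x) :=
    hderiv ▸ (derivative (H n)).differentiable
  have hode (x : ℝ) : deriv (deriv fun x ↦ (H n).eval x) x =
      2 * x * deriv (fun x ↦ (H n).eval x) x - 2 * n * (H n).eval x := by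
    rw [hderiv, Polynomial.deriv, derivative_derivative_H]
    simp
  have hodd : (fun x ↦ (H n).eval x).Odd := fun x ↦ by
    simp only [eval_neg_H, hn.neg_one_pow, neg_one_mul]
  have hcrit := finite_crit_H hn.pos.ne'
  exact {
    differentiable := hf
    odd := hodd
    tendsto_atTop := tendsto_eval_H_atTop hn.pos.ne'
    finite_crit := hcrit
    ne_zero_of_crit := eval_H_ne_zero_of_deriv_eq_zero
    isLocalMin_of_crit := isLocalMin_of_hermite_equation hN hf hode
    abs_lt_abs := abs_lt_abs_of_hermite_equation hN hf hf' hode hodd hcrit }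

end Hermite

section NodalSet

theorem Phi_eq_weightedSum_mul (n : ℕ) (θ : ℝ) (p : ℝ × ℝ) :
    Phi n θ p = weightedSum (fun x ↦ (H n).eval x) (Real.cos θ) (Real.sin θ) p *
      Real.exp (-(p.1 ^ 2 + p.2 ^ 2) / 2) := rfl

theorem continuous_Phi (n : ℕ) (θ : ℝ) : Continuous (Phi n θ) := by
  unfold Phi
  fun_prop

theorem setOf_Phi_pos (n : ℕ) (θ : ℝ) : {p | 0 < Phi n θ p} =
    posRegion (fun x ↦ (H n).eval x) (Real.cos θ) (Real.sin θ) := by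
  ext p
  exact mul_pos_iff_of_pos_right (Real.exp_pos _)

theorem setOf_Phi_neg (n : ℕ) (θ : ℝ) : {p | Phi n θ p < 0} =
    posRegion (fun x ↦ (H n).eval x) (-Real.cos θ) (-Real.sin θ) := by
  ext p
  rw [mem_ofPred_eq, ← neg_pos, Phi_eq_weightedSum_mul, ← neg_mul,
    mul_pos_iff_of_pos_right (Real.exp_pos _), weightedSum, neg_add, ← neg_mul, ← neg_mul]
  rfl

variable {n : ℕ} {θ : ℝ}

theorem fderiv_Phi_ne_zero (hn : Odd n) (hcos : Real.cos θ ≠ 0) (hsin : Real.sin θ ≠ 0)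
    (hne : |Real.cos θ| ≠ |Real.sin θ|)
    (hord : PreservesCriticalOrder (fun x ↦ (H n).eval x) (Real.cos θ) (Real.sin θ))
    {p : ℝ × ℝ} (hp : Phi n θ p = 0) : fderiv ℝ (Phi n θ) p ≠ 0 := by
  have hf := isGrowingOddOscillation_H hn
  have hp' := (mul_eq_zero.1 hp).resolve_right (Real.exp_ne_zero _)
  exact fderiv_mul_ne_zero_of_left_eq_zero
    (hasFDerivAt_weightedSum hf.differentiable).differentiableAt (by fun_prop) hp'
    (Real.exp_ne_zero _) (fderiv_weightedSum_ne_zero hf hcos hsin hne hord hp')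

theorem isConnected_setOf_Phi_pos (hn : Odd n) (hcos : Real.cos θ ≠ 0) (hsin : Real.sin θ ≠ 0)
    (hne : |Real.cos θ| ≠ |Real.sin θ|)
    (hord : PreservesCriticalOrder (fun x ↦ (H n).eval x) (Real.cos θ) (Real.sin θ)) :
    IsConnected {p | 0 < Phi n θ p} :=
  setOf_Phi_pos n θ ▸
    (isPathConnected_posRegion (isGrowingOddOscillation_H hn) hcos hsin hne hord).isConnected

theorem isConnected_setOf_Phi_neg (hn : Odd n) (hcos : Real.cos θ ≠ 0) (hsin : Real.sin θ ≠ 0)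
    (hne : |Real.cos θ| ≠ |Real.sin θ|)
    (hord : PreservesCriticalOrder (fun x ↦ (H n).eval x) (Real.cos θ) (Real.sin θ)) :
    IsConnected {p | Phi n θ p < 0} := by
  rw [setOf_Phi_neg]
  refine (isPathConnected_posRegion (isGrowingOddOscillation_H hn) (neg_ne_zero.2 hcos)
    (neg_ne_zero.2 hsin) (by rwa [abs_neg, abs_neg]) ?_).isConnected
  simpa only [PreservesCriticalOrder, abs_neg] using hord

/-- The nodal set of `Φ^θ_n` is connected (in particular nonempty) and regular, with exactly two
nodal domains. -/
def HasTwoNodalDomains (n : ℕ) (θ : ℝ) : Prop :=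
  IsConnected (nodalSet n θ) ∧ (∀ p ∈ nodalSet n θ, fderiv ℝ (Phi n θ) p ≠ 0) ∧
    numNodalDomains n θ = 2

theorem hasTwoNodalDomains_of_preservesCriticalOrder (hn : Odd n) (hcos : Real.cos θ ≠ 0)
    (hsin : Real.sin θ ≠ 0) (hne : |Real.cos θ| ≠ |Real.sin θ|)
    (hord : PreservesCriticalOrder (fun x ↦ (H n).eval x) (Real.cos θ) (Real.sin θ)) :
    HasTwoNodalDomains n θ := by
  have hpos := isConnected_setOf_Phi_pos hn hcos hsin hne hord
  have hneg := isConnected_setOf_Phi_neg hn hcos hsin hne hord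
  have hreg : ∀ p, Phi n θ p = 0 → fderiv ℝ (Phi n θ) p ≠ 0 := fun p ↦
    fderiv_Phi_ne_zero hn hcos hsin hne hord
  exact ⟨isConnected_zeroSet_of_fderiv_ne_zero (continuous_Phi n θ) hpos hneg hreg, hreg,
    ncard_connectedComponentIn_ne_zero (continuous_Phi n θ) hpos hneg⟩

theorem eventually_hasTwoNodalDomains (hn : Odd n) {θ₀ : ℝ}
    (h : |Real.cos θ₀| = |Real.sin θ₀|) : ∀ᶠ θ in 𝓝[≠] θ₀, HasTwoNodalDomains n θ := by
  have hcos₀ := cos_ne_zero_of_abs_cos_eq_abs_sin h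
  have hsin₀ := sin_ne_zero_of_abs_cos_eq_abs_sin h
  have hweights : ContinuousAt (fun θ ↦ (Real.cos θ, Real.sin θ)) θ₀ := by fun_prop
  have hord_near := hweights.eventually
    (eventually_preservesCriticalOrder (isGrowingOddOscillation_H hn).finite_crit h hsin₀)
  filter_upwards [nhdsWithin_le_nhds (Real.continuous_cos.continuousAt.eventually_ne hcos₀),
    nhdsWithin_le_nhds (Real.continuous_sin.continuousAt.eventually_ne hsin₀),
    eventually_abs_cos_ne_abs_sin h, nhdsWithin_le_nhds hord_near] with θ hcos hsin hne hord
  exact hasTwoNodalDomains_of_preservesCriticalOrder hn hcos hsin hne hord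

theorem exists_Ioo_hasTwoNodalDomains (hn : Odd n) {θ₀ : ℝ}
    (h : |Real.cos θ₀| = |Real.sin θ₀|) :
    ∃ a b, a < θ₀ ∧ θ₀ < b ∧ ∀ θ ∈ Ioo a b, θ ≠ θ₀ → HasTwoNodalDomains n θ := by
  obtain ⟨a, b, ⟨ha, hb⟩, hsub⟩ := mem_nhds_iff_exists_Ioo_subset.1
    (eventually_nhdsWithin_iff.1 (eventually_hasTwoNodalDomains hn h))
  exact ⟨a, b, ha, hb, fun θ hθ ↦ hsub hθ⟩

end NodalSet

end

open Real Set in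
/-- **Theorem 1.1.** For `n` odd there are open intervals `I_{π/4} ∋ π/4` and
`I_{3π/4} ∋ 3π/4` such that for every `θ` in their union, other than `π/4` and `3π/4`,
the nodal set `N(Φ^θ_n)` is a nonempty connected regular curve (the gradient of
`Φ^θ_n` vanishes nowhere on it), and `Φ^θ_n` has exactly two nodal domains in `ℝ²`. -/
theorem two_nodal_domains_near_pi_div_four_and_three_pi_div_four
    (n : ℕ) (hodd : Odd n) (hpos : 0 < n) :
    ∃ a₁ b₁ a₂ b₂ : ℝ, a₁ < π / 4 ∧ π / 4 < b₁ ∧ a₂ < 3 * π / 4 ∧ 3 * π / 4 < b₂ ∧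
      ∀ θ ∈ (Set.Ioo a₁ b₁ ∪ Set.Ioo a₂ b₂) \ {π / 4, 3 * π / 4},
        (nodalSet n θ).Nonempty ∧
        IsConnected (nodalSet n θ) ∧
        (∀ p ∈ nodalSet n θ, fderiv ℝ (Phi n θ) p ≠ 0) ∧
        numNodalDomains n θ = 2 := by
  have hquarter : |cos (π / 4)| = |sin (π / 4)| := by rw [cos_pi_div_four, sin_pi_div_four]
  have hthree : |cos (3 * π / 4)| = |sin (3 * π / 4)| := by
    rw [abs_cos_eq_abs_sin_iff, cos_eq_zero_iff]
    exact ⟨1, by push_cast; ring⟩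
  obtain ⟨a₁, b₁, ha₁, hb₁, h₁⟩ := exists_Ioo_hasTwoNodalDomains hodd hquarter
  obtain ⟨a₂, b₂, ha₂, hb₂, h₂⟩ := exists_Ioo_hasTwoNodalDomains hodd hthree
  refine ⟨a₁, b₁, a₂, b₂, ha₁, hb₁, ha₂, hb₂, ?_⟩
  rintro θ ⟨hθ, hθne⟩
  rw [mem_insert_iff, mem_singleton_iff, not_or] at hθne
  have htwo : HasTwoNodalDomains n θ := hθ.elim (h₁ θ · hθne.1) (h₂ θ · hθne.2)
  exact ⟨htwo.1.nonempty, htwo⟩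
end

section
/- Let n ≥ 1 and θ ∈ (0,π) with θ ≠ π/2. If (x,y) ∈ ℝ² is a critical zero of Φ^θ_n, then H_{n−1}(x) = 0 and H_{n−1}(y) = 0 and cos θ · H_n(x) + sin θ · H_n(y) = 0. Consequently, the set of θ ∈ [0,π) for which Φ^θ_n has at least one critical zero is finite. -/
/-- A critical zero of `Φ^θ_n` is a point where `Φ^θ_n` and both of its first-order
partial derivatives vanish. -/
noncomputable def IsCriticalZero (n : ℕ) (θ : ℝ) (p : ℝ × ℝ) : Prop :=
  Phi n θ p = 0 ∧
  deriv (fun x => Phi n θ (x, p.2)) p.1 = 0 ∧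
  deriv (fun y => Phi n θ (p.1, y)) p.2 = 0

/-!
The Gaussian factor never vanishes, so the critical zeros of `Φ^θ_n` are those of the Hermite
factor `cos θ · H_n(x) + sin θ · H_n(y)`. As `H_n' = 2n H_{n-1}`, its gradient vanishes exactly
when `cos θ · H_{n-1}(x) = 0` and `sin θ · H_{n-1}(y) = 0`. Consecutive Hermite polynomials have
no common zero, which excludes `cos θ = 0` and `sin θ = 0` and leaves `H_{n-1}(x) = H_{n-1}(y) = 0`.
For each of the finitely many such pairs, `cos θ · H_n(x) + sin θ · H_n(y) = 0` is an equation for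
`θ` with nonzero coefficients, and determines `θ` modulo `π`.
-/

section

open Polynomial Real Set

theorem derivative_H_succ : ∀ n : ℕ, derivative (H (n + 1)) = C (2 * (n + 1) : ℝ) * H n
  | 0 => by simp [H]
  | n + 1 => by
    have hterms : C 2 * X * derivative (H (n + 1)) - C (2 * (n + 1) : ℝ) * derivative (H n) =
        C (2 * (n + 1) : ℝ) * H (n + 1) := by
      cases n with
      | zero =>
        rw [H, H, derivative_one, derivative_C_mul_X, mul_zero, sub_zero, Nat.cast_zero, zero_add,
          mul_one]
        ring
      | succ k =>
        rw [derivative_H_succ (k + 1), derivative_H_succ k, H]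
        push_cast
        ring
    rw [H, derivative_sub, derivative_mul, derivative_mul, derivative_C_mul, derivative_C,
      derivative_X, zero_mul, zero_add, mul_one, add_sub_assoc, hterms, ← add_mul, ← C_add]
    congr 2
    push_cast
    ring

theorem H_ne_zero : ∀ n : ℕ, H n ≠ 0
  | 0 => one_ne_zero
  | n + 1 => fun h => by
    have hderiv : C (2 * (n + 1) : ℝ) * H n = 0 := by rw [← derivative_H_succ, h, derivative_zero]
    exact mul_ne_zero (C_ne_zero.2 (by positivity)) (H_ne_zero n) hderiv

theorem eval_H_succ_ne_zero {x : ℝ} : ∀ {n : ℕ}, (H n).eval x = 0 → (H (n + 1)).eval x ≠ 0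
  | 0, h => by simp [H] at h
  | n + 1, h => fun hsucc => by
    have hn : (H n).eval x ≠ 0 := fun hn => eval_H_succ_ne_zero hn h
    have hmul : (2 * (n + 1) : ℝ) * (H n).eval x = 0 := by simpa [H, h] using hsucc
    exact mul_ne_zero (by positivity) hn hmul

theorem deriv_mul_eq_zero_iff_of_eq_zero {𝕜 : Type*} [NontriviallyNormedField 𝕜] {u g : 𝕜 → 𝕜}
    {a : 𝕜} (hu : DifferentiableAt 𝕜 u a) (hg : DifferentiableAt 𝕜 g a) (hua : u a = 0)
    (hga : g a ≠ 0) : deriv (fun t => u t * g t) a = 0 ↔ deriv u a = 0 := by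
  rw [deriv_fun_mul hu hg, hua, zero_mul, add_zero, mul_eq_zero_iff_right hga]

theorem isCriticalZero_iff {n : ℕ} {θ : ℝ} {p : ℝ × ℝ} :
    IsCriticalZero n θ p ↔ cos θ * (H n).eval p.1 + sin θ * (H n).eval p.2 = 0 ∧
      cos θ * (derivative (H n)).eval p.1 = 0 ∧ sin θ * (derivative (H n)).eval p.2 = 0 := by
  have hzero : Phi n θ p = 0 ↔ cos θ * (H n).eval p.1 + sin θ * (H n).eval p.2 = 0 :=
    mul_eq_zero_iff_right (exp_ne_zero _)
  have hx : deriv (fun x => cos θ * (H n).eval x + sin θ * (H n).eval p.2) p.1 =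
      cos θ * (derivative (H n)).eval p.1 := by
    rw [deriv_add_const, deriv_const_mul_field, Polynomial.deriv]
  have hy : deriv (fun y => cos θ * (H n).eval p.1 + sin θ * (H n).eval y) p.2 =
      sin θ * (derivative (H n)).eval p.2 := by
    rw [deriv_const_add, deriv_const_mul_field, Polynomial.deriv]
  rw [IsCriticalZero, hzero, ← hx, ← hy]
  exact and_congr_right fun h => and_congr
    (deriv_mul_eq_zero_iff_of_eq_zero (by fun_prop) (by fun_prop) h (exp_ne_zero _))
    (deriv_mul_eq_zero_iff_of_eq_zero (by fun_prop) (by fun_prop) h (exp_ne_zero _))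

theorem isCriticalZero_succ_iff {n : ℕ} {θ x y : ℝ} :
    IsCriticalZero (n + 1) θ (x, y) ↔ (H n).eval x = 0 ∧ (H n).eval y = 0 ∧
      cos θ * (H (n + 1)).eval x + sin θ * (H (n + 1)).eval y = 0 := by
  have hc : (2 * (n + 1) : ℝ) ≠ 0 := by positivity
  simp only [isCriticalZero_iff, derivative_H_succ, eval_mul, eval_C, mul_left_comm _ (2 * _ : ℝ),
    mul_eq_zero_iff_left hc]
  constructor
  · rintro ⟨hzero, hx, hy⟩
    have hcos : cos θ ≠ 0 := fun hcos => by
      have hsin : sin θ ≠ 0 := fun hsin => by simpa [hcos, hsin] using sin_sq_add_cos_sq θ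
      have hy' := (mul_eq_zero_iff_left hsin).1 hy
      exact mul_ne_zero hsin (eval_H_succ_ne_zero hy') (by simpa [hcos] using hzero)
    have hx' := (mul_eq_zero_iff_left hcos).1 hx
    have hsin : sin θ ≠ 0 := fun hsin =>
      mul_ne_zero hcos (eval_H_succ_ne_zero hx') (by simpa [hsin] using hzero)
    exact ⟨hx', (mul_eq_zero_iff_left hsin).1 hy, hzero⟩
  · rintro ⟨hx, hy, hzero⟩
    exact ⟨hzero, by rw [hx, mul_zero], by rw [hy, mul_zero]⟩

theorem subsingleton_cos_mul_add_sin_mul_eq_zero {a b : ℝ} (hab : a ≠ 0 ∨ b ≠ 0) (c : ℝ) :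
    {θ ∈ Ico c (c + π) | cos θ * a + sin θ * b = 0}.Subsingleton := by
  rintro s ⟨⟨hcs, hsc⟩, hs⟩ t ⟨⟨hct, htc⟩, ht⟩
  have hsin : sin (s - t) = 0 := by
    rw [sin_sub]
    rcases hab with ha | hb
    · refine (mul_eq_zero_iff_right ha).1 ?_
      linear_combination sin s * ht - sin t * hs
    · refine (mul_eq_zero_iff_right hb).1 ?_
      linear_combination cos t * hs - cos s * ht
  exact sub_eq_zero.1 ((sin_eq_zero_iff_of_lt_of_lt (by linarith) (by linarith)).1 hsin)

theorem finite_setOf_exists_isCriticalZero_succ (n : ℕ) (c : ℝ) :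
    {θ ∈ Ico c (c + π) | ∃ p, IsCriticalZero (n + 1) θ p}.Finite := by
  have hroots : {x | (H n).eval x = 0}.Finite := finite_setOfPred_isRoot (H_ne_zero n)
  have hangles : ∀ p ∈ {x | (H n).eval x = 0} ×ˢ {x | (H n).eval x = 0},
      {θ ∈ Ico c (c + π) |
        cos θ * (H (n + 1)).eval p.1 + sin θ * (H (n + 1)).eval p.2 = 0}.Finite := fun p hp =>
    (subsingleton_cos_mul_add_sin_mul_eq_zero (.inl (eval_H_succ_ne_zero hp.1)) c).finite
  refine ((hroots.prod hroots).biUnion hangles).subset ?_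
  rintro θ ⟨hθ, p, hp⟩
  obtain ⟨hx, hy, hzero⟩ := isCriticalZero_succ_iff.1 hp
  exact mem_biUnion (x := p) ⟨hx, hy⟩ ⟨hθ, hzero⟩

theorem critical_zero_characterization_general (n : ℕ) (hn : 1 ≤ n) :
    (∀ θ x y, IsCriticalZero n θ (x, y) ↔ (H (n - 1)).eval x = 0 ∧ (H (n - 1)).eval y = 0 ∧
      cos θ * (H n).eval x + sin θ * (H n).eval y = 0) ∧
    ∀ c, {θ ∈ Ico c (c + π) | ∃ p, IsCriticalZero n θ p}.Finite := by
  obtain ⟨m, rfl⟩ := Nat.exists_eq_add_of_le' hn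
  exact ⟨fun _ _ _ => isCriticalZero_succ_iff, finite_setOf_exists_isCriticalZero_succ m⟩

end

open Real Set in
/-- **Lemma 3.1 (critical zeros).** For `θ ∈ (0,π)`, `θ ≠ π/2`, a critical zero
`(x,y)` of `Φ^θ_n` satisfies `H_{n-1}(x) = 0`, `H_{n-1}(y) = 0` and
`cos θ · H_n(x) + sin θ · H_n(y) = 0`; consequently the set of `θ ∈ [0,π)` for which
`Φ^θ_n` has a critical zero is finite. -/
theorem critical_zero_characterization (n : ℕ) (hn : 1 ≤ n) (θ : ℝ)
    (hθ : θ ∈ Set.Ioo 0 π) (hθ' : θ ≠ π / 2) (x y : ℝ)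
    (hcz : IsCriticalZero n θ (x, y)) :
    ((H (n - 1)).eval x = 0 ∧ (H (n - 1)).eval y = 0 ∧
      Real.cos θ * (H n).eval x + Real.sin θ * (H n).eval y = 0) ∧
    {ϑ ∈ Set.Ico (0 : ℝ) π | ∃ p : ℝ × ℝ, IsCriticalZero n ϑ p}.Finite := by
  obtain ⟨hiff, hfinite⟩ := critical_zero_characterization_general n hn
  exact ⟨(hiff θ x y).1 hcz, by simpa only [zero_add] using hfinite 0⟩
end
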